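/- arXiv:1708.02878 — 3 statements merged into one kernel-verified Lean document; each statement's English description precedes it below -/
import Mathlib

section
/- Let U ⊆ ℝ be open and f : U → ℝ a real-analytic function with f(x) ≥ 0 for all x ∈ U. Then the function x ↦ √(f(x)) is locally Lipschitz on U. Moreover, on the open subset {x ∈ U : f(x) > 0}, the function x ↦ √(f(x)) is real-analytic. -/
open Filter Topology in
/-- Near any point, the square root of a nonnegative real-analytic function of one variable is
the absolute value of a real-analytic function. -/
theorem AnalyticAt.exists_sqrt_eventuallyEq_abs {f : ℝ → ℝ} {a : ℝ} (hf : AnalyticAt ℝ f a)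
    (hpos : ∀ᶠ x in 𝓝 a, 0 ≤ f x) :
    ∃ h : ℝ → ℝ, AnalyticAt ℝ h a ∧ ∀ᶠ x in 𝓝 a, √(f x) = |h x| := by
  by_cases hz : ∀ᶠ x in 𝓝 a, f x = 0
  · refine ⟨fun _ => 0, analyticAt_const, ?_⟩
    filter_upwards [hz] with x hx
    simp [hx]
  obtain ⟨n, g, hg, hga, hfg⟩ := hf.exists_eventuallyEq_pow_smul_nonzero_iff.mpr hz
  have hg_pos : 0 < g a := by
    refine lt_of_le_of_ne ?_ hga.symm
    refine ge_of_tendsto (hg.continuousAt.tendsto.mono_left (nhdsWithin_le_nhds (s := Set.Ioi a))) ?_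
    filter_upwards [nhdsWithin_le_nhds hpos, nhdsWithin_le_nhds hfg, self_mem_nhdsWithin]
      with x hx hxg hax
    rw [hxg, smul_eq_mul] at hx
    exact nonneg_of_mul_nonneg_right hx (pow_pos (sub_pos.mpr hax) n)
  have hg_ev : ∀ᶠ x in 𝓝 a, 0 < g x := hg.continuousAt.eventually (lt_mem_nhds hg_pos)
  have hn : Even n := by
    by_contra hodd
    rw [Nat.not_even_iff_odd] at hodd
    have hleft : ∀ᶠ x in 𝓝[<] a, False := by
      filter_upwards [nhdsWithin_le_nhds hpos, nhdsWithin_le_nhds hfg,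
        nhdsWithin_le_nhds hg_ev, self_mem_nhdsWithin] with x hx hxg hgx hax
      rw [hxg, smul_eq_mul] at hx
      exact hx.not_gt (mul_neg_of_neg_of_pos (hodd.pow_neg (sub_neg.mpr hax)) hgx)
    exact hleft.exists.choose_spec
  obtain ⟨k, rfl⟩ := hn
  refine ⟨fun x => (x - a) ^ k * √(g x),
    ((analyticAt_id.sub analyticAt_const).pow k).mul
      (hg.contDiffAt.sqrt hga).analyticAt, ?_⟩
  filter_upwards [hfg, hg_ev] with x hx hgx
  rw [hx, smul_eq_mul, ← Real.sqrt_sq_eq_abs, mul_pow, Real.sq_sqrt hgx.le, ← pow_mul, mul_two]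


/-- The square root of a nonnegative real-analytic function on an open set `U ⊆ ℝ` is
locally Lipschitz on `U`, and real-analytic on the open subset where the function is
positive. -/
theorem stmt5 (U : Set ℝ) (hU : IsOpen U) (f : ℝ → ℝ)
    (hf : AnalyticOnNhd ℝ f U) (hpos : ∀ x ∈ U, 0 ≤ f x) :
    LocallyLipschitzOn U (fun x => Real.sqrt (f x)) ∧
      AnalyticOnNhd ℝ (fun x => Real.sqrt (f x)) {x ∈ U | 0 < f x} := by
  refine ⟨fun a ha => ?_, fun a ha => ((hf a ha.1).contDiffAt.sqrt ha.2.ne').analyticAt⟩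
  obtain ⟨h, hh, hfh⟩ := (hf a ha).exists_sqrt_eventuallyEq_abs
    (Filter.eventually_of_mem (hU.mem_nhds ha) hpos)
  obtain ⟨K, t, ht, hK⟩ := hh.contDiffAt.exists_lipschitzOnWith
  refine ⟨K, t ∩ {x | √(f x) = |h x|},
    mem_nhdsWithin_of_mem_nhds (Filter.inter_mem ht hfh), ?_⟩
  refine LipschitzOnWith.of_dist_le_mul fun x hx y hy => ?_
  rw [hx.2, hy.2]
  exact (abs_abs_sub_abs_le_abs_sub (h x) (h y)).trans (hK.dist_le_mul x hx.1 y hy.1)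
end

section
/- Fix a natural number n ≥ 2, real numbers ℓ > 0 and a with 4ℓ²a + n² > 0, and natural numbers k, K. Set s := √(4ℓ²a + n²), ω := (n + s + 2k + 4K)/(2ℓ), and for x ∈ ℝ and j ∈ ℕ let (x)_j := ∏_{i=0}^{j−1}(x+i) denote the rising factorial. Define ψ : (0,∞) → ℝ by ψ(r) := (ℓ² + r²)^{−ℓω/2} · r^k · ∑_{j=0}^{K} [((−K)_j · (−K − s/2)_j) / ((n/2 + k)_j · j!)] · (−r²/ℓ²)^j. Then ψ is twice differentiable on (0,∞) and for every r > 0 it satisfies the radial eigenvalue equation (r²/ℓ² + 1)·[ r^{1−n} · d/dr( (r²/ℓ² + 1) · r^{n−1} · ψ'(r) ) − k(k + n − 2) · r^{−2} · ψ(r) ] = −ω² ψ(r) + a · (r²/ℓ² + 1) · ψ(r). -/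
open Polynomial in
/-- A partial sum of a hypergeometric series satisfies the hypergeometric equation up to a single
top-order monomial. -/
lemma hypergeometric_partial_sum_residual (A B C : ℝ) (c : ℕ → ℝ)
    (hc : ∀ j : ℕ, c (j + 1) * ((C + j) * (j + 1)) = (A + j) * (B + j) * c j) (m : ℕ) (z : ℝ) :
    let P : ℝ[X] := ∑ j ∈ Finset.range (m + 1), Polynomial.C (c j) * X ^ j
    z * (1 - z) * P.derivative.derivative.eval z + (C - (A + B + 1) * z) * P.derivative.eval z
      - A * B * P.eval z = -((A + m) * (B + m) * c m * z ^ m) := by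
  intro P
  induction m with
  | zero => simp [P]
  | succ m ih =>
    have hz : z * ((m : ℝ) * z ^ (m - 1)) = m * z ^ m := by
      cases m with
      | zero => simp
      | succ m => simp only [Nat.add_sub_cancel]; ring
    simp only [P, Finset.sum_range_succ _ (m + 1), derivative_add, eval_add, derivative_C_mul,
      eval_mul, eval_C, derivative_X_pow, Nat.add_sub_cancel, eval_pow, eval_X, map_natCast,
      derivative_natCast_mul, eval_natCast] at ih ⊢
    push_cast
    linear_combination ih + c (m + 1) * (1 - z) * (m + 1) * hz + z ^ m * hc m

/-- Product rule for `(L + t²)^μ t^k u(t)`, with the prefactor pulled out of the derivative. -/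
lemma hasDerivAt_rpow_mul_pow_mul {L μ t u' : ℝ} {u : ℝ → ℝ} (k : ℕ) (hL : 0 ≤ L) (ht : 0 < t)
    (hu : HasDerivAt u u' t) :
    HasDerivAt (fun x => (L + x ^ 2) ^ μ * x ^ k * u x)
      ((L + t ^ 2) ^ μ * t ^ k * ((2 * μ * t / (L + t ^ 2) + k / t) * u t + u')) t := by
  have hpos : 0 < L + t ^ 2 := by positivity
  have hW := ((hasDerivAt_pow 2 t).const_add L).rpow_const (p := μ) (Or.inl hpos.ne')
  have hk : (k : ℝ) * t ^ (k - 1) = k / t * t ^ k := by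
    cases k with
    | zero => simp
    | succ k => rw [Nat.add_sub_cancel, pow_succ]; field_simp
  refine ((hW.mul (hasDerivAt_pow k t)).mul hu).congr_deriv ?_
  rw [hk, Real.rpow_sub_one hpos.ne']
  simp only [Pi.mul_apply]
  push_cast
  ring

/-- The explicit terminating-hypergeometric radial profile
`ψ(r) = (ℓ²+r²)^{-ℓω/2} r^k ∑_{j=0}^{K} ((-K)_j (-K-s/2)_j)/((n/2+k)_j j!) (-r²/ℓ²)^j`
with `s = √(4ℓ²a+n²)` and `ω = (n+s+2k+4K)/(2ℓ)` is twice differentiable on `(0,∞)` and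
solves the radial eigenvalue equation on the anti-de Sitter background. -/
theorem stmt9 (n : ℕ) (hn : 2 ≤ n) (ℓ a s ω : ℝ) (hℓ : 0 < ℓ)
    (hpos : 0 < 4 * ℓ ^ 2 * a + (n : ℝ) ^ 2)
    (k K : ℕ)
    (hs : s = Real.sqrt (4 * ℓ ^ 2 * a + (n : ℝ) ^ 2))
    (hω : ω = ((n : ℝ) + s + 2 * k + 4 * K) / (2 * ℓ))
    (rf : ℝ → ℕ → ℝ)
    (hrf : ∀ (x : ℝ) (j : ℕ), rf x j = ∏ i ∈ Finset.range j, (x + i))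
    (ψ : ℝ → ℝ)
    (hψ : ∀ r : ℝ, ψ r =
      (ℓ ^ 2 + r ^ 2) ^ (-(ℓ * ω) / 2) * r ^ k *
        ∑ j ∈ Finset.range (K + 1),
          (rf (-(K : ℝ)) j * rf (-(K : ℝ) - s / 2) j) /
              (rf ((n : ℝ) / 2 + (k : ℝ)) j * (Nat.factorial j : ℝ)) *
            (-(r ^ 2) / ℓ ^ 2) ^ j) :
    ∀ r : ℝ, 0 < r →
      DifferentiableAt ℝ ψ r ∧
      DifferentiableAt ℝ (deriv ψ) r ∧
      (r ^ 2 / ℓ ^ 2 + 1) *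
          (r ^ ((1 : ℝ) - (n : ℝ)) *
              deriv (fun t : ℝ => (t ^ 2 / ℓ ^ 2 + 1) * t ^ ((n : ℝ) - 1) * deriv ψ t) r -
            (k : ℝ) * ((k : ℝ) + (n : ℝ) - 2) * (ψ r / r ^ 2)) =
        -(ω ^ 2) * ψ r + a * (r ^ 2 / ℓ ^ 2 + 1) * ψ r := by
  intro r hr
  set A : ℝ := -(K : ℝ) with hA
  set B : ℝ := -(K : ℝ) - s / 2 with hB
  set C : ℝ := (n : ℝ) / 2 + (k : ℝ) with hC
  have hn' : (2 : ℝ) ≤ n := by exact_mod_cast hn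
  have hC0 : 0 < C := by positivity
  have hsucc (x : ℝ) (j : ℕ) : rf x (j + 1) = rf x j * (x + j) := by
    simp only [hrf, Finset.prod_range_succ]
  have hCrf (j : ℕ) : rf C j ≠ 0 := by
    rw [hrf]
    exact Finset.prod_ne_zero_iff.2 fun i _ => by positivity
  set c : ℕ → ℝ := fun j => rf A j * rf B j / (rf C j * (Nat.factorial j : ℝ)) with hcdef
  have hc (j : ℕ) : c (j + 1) * ((C + j) * (j + 1)) = (A + j) * (B + j) * c j := by
    have h₁ := hCrf j
    have h₂ : C + j ≠ 0 := by positivity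
    simp only [hcdef, hsucc, Nat.factorial_succ]
    push_cast
    field_simp
  set P : Polynomial ℝ := ∑ j ∈ Finset.range (K + 1), Polynomial.C (c j) * Polynomial.X ^ j
    with hP
  have hode (z : ℝ) : z * (1 - z) * P.derivative.derivative.eval z
      + (C - (A + B + 1) * z) * P.derivative.eval z - A * B * P.eval z = 0 := by
    refine (hypergeometric_partial_sum_residual A B C c hc K z).trans ?_
    simp [hA]
  set μ : ℝ := -(ℓ * ω) / 2 with hμ
  have hψ' : ψ = fun x => (ℓ ^ 2 + x ^ 2) ^ μ * x ^ k * P.eval (-(x ^ 2) / ℓ ^ 2) := by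
    funext x
    rw [hψ, hP, Polynomial.eval_finsetSum]
    simp [hcdef]
  have hcomp (Q : Polynomial ℝ) (t : ℝ) : HasDerivAt (fun x => Q.eval (-(x ^ 2) / ℓ ^ 2))
      (Q.derivative.eval (-(t ^ 2) / ℓ ^ 2) * (-(2 * t) / ℓ ^ 2)) t := by
    have h : HasDerivAt (fun x : ℝ => -(x ^ 2) / ℓ ^ 2) (-(2 * t) / ℓ ^ 2) t := by
      simpa using ((hasDerivAt_pow 2 t).neg).div_const (ℓ ^ 2)
    exact (Q.hasDerivAt _).comp t h
  have hd₁ (t : ℝ) (ht : 0 < t) := hasDerivAt_rpow_mul_pow_mul (μ := μ) k (sq_nonneg ℓ) ht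
    (hcomp P t)
  rw [← hψ'] at hd₁
  have hev : deriv ψ =ᶠ[nhds r] fun t => (ℓ ^ 2 + t ^ 2) ^ μ * t ^ k *
      ((2 * μ * t / (ℓ ^ 2 + t ^ 2) + k / t) * P.eval (-(t ^ 2) / ℓ ^ 2)
        + P.derivative.eval (-(t ^ 2) / ℓ ^ 2) * (-(2 * t) / ℓ ^ 2)) := by
    filter_upwards [lt_mem_nhds hr] with t ht using (hd₁ t ht).deriv
  have hrpos : 0 < ℓ ^ 2 + r ^ 2 := by positivity
  have hlog : HasDerivAt (fun x : ℝ => 2 * μ * x / (ℓ ^ 2 + x ^ 2) + k / x)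
      (2 * μ * (ℓ ^ 2 - r ^ 2) / (ℓ ^ 2 + r ^ 2) ^ 2 - k / r ^ 2) r := by
    refine ((((hasDerivAt_id r).const_mul (2 * μ)).div ((hasDerivAt_pow 2 r).const_add (ℓ ^ 2))
      hrpos.ne').add ((hasDerivAt_const r (k : ℝ)).div (hasDerivAt_id r) hr.ne')).congr_deriv ?_
    simp only [id]
    push_cast
    field_simp
    ring
  have hlin : HasDerivAt (fun x : ℝ => -(2 * x) / ℓ ^ 2) (-2 / ℓ ^ 2) r := by
    simpa using (((hasDerivAt_id r).const_mul 2).neg).div_const (ℓ ^ 2)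
  have hd₂ := (hasDerivAt_rpow_mul_pow_mul (μ := μ) k (sq_nonneg ℓ) hr
    ((hlog.mul (hcomp P r)).add ((hcomp P.derivative r).mul hlin))).congr_of_eventuallyEq hev
  refine ⟨(hd₁ r hr).differentiableAt, hd₂.differentiableAt, ?_⟩
  have hV : HasDerivAt (fun t : ℝ => t ^ 2 / ℓ ^ 2 + 1) (2 * r / ℓ ^ 2) r := by
    simpa using ((hasDerivAt_pow 2 r).div_const (ℓ ^ 2)).add_const 1
  have hpow : HasDerivAt (fun t : ℝ => t ^ ((n : ℝ) - 1))
      (((n : ℝ) - 1) / r * r ^ ((n : ℝ) - 1)) r :=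
    (Real.hasDerivAt_rpow_const (Or.inl hr.ne')).congr_deriv (by
      rw [Real.rpow_sub_one hr.ne']; ring)
  have hinv : r ^ ((1 : ℝ) - n) * r ^ ((n : ℝ) - 1) = 1 := by
    rw [← Real.rpow_add hr]; simp
  have hflux : r ^ ((1 : ℝ) - n) *
      deriv (fun t : ℝ => (t ^ 2 / ℓ ^ 2 + 1) * t ^ ((n : ℝ) - 1) * deriv ψ t) r =
      (2 * r / ℓ ^ 2 + (r ^ 2 / ℓ ^ 2 + 1) * ((n - 1) / r)) * deriv ψ r
        + (r ^ 2 / ℓ ^ 2 + 1) * deriv (deriv ψ) r := by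
    rw [HasDerivAt.deriv (f := fun t : ℝ => (t ^ 2 / ℓ ^ 2 + 1) * t ^ ((n : ℝ) - 1) * deriv ψ t)
      ((hV.mul hpow).mul hd₂.differentiableAt.hasDerivAt)]
    simp only [Pi.mul_apply]
    linear_combination ((2 * r / ℓ ^ 2 + (r ^ 2 / ℓ ^ 2 + 1) * ((n - 1) / r)) * deriv ψ r
        + (r ^ 2 / ℓ ^ 2 + 1) * deriv (deriv ψ) r) * hinv
  have ha : a = (s ^ 2 - n ^ 2) / (4 * ℓ ^ 2) := by
    rw [hs, Real.sq_sqrt hpos.le]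
    field_simp
    ring
  have hμ' : μ = -(n + s + 2 * k + 4 * K) / 4 := by
    rw [hμ, hω]
    field_simp
    norm_num
  have hz := hode (-(r ^ 2) / ℓ ^ 2)
  rw [hflux, hd₂.deriv, (hd₁ r hr).deriv, congrFun hψ' r, ha, hω]
  simp only [Pi.mul_apply, Pi.add_apply]
  generalize (ℓ ^ 2 + r ^ 2) ^ μ * r ^ k = W
  generalize P.eval (-(r ^ 2) / ℓ ^ 2) = p₀ at *
  generalize P.derivative.eval (-(r ^ 2) / ℓ ^ 2) = p₁ at *
  generalize P.derivative.derivative.eval (-(r ^ 2) / ℓ ^ 2) = p₂ at *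
  rw [hμ']
  rw [hA, hB, hC] at hz
  rw [← sub_eq_zero]
  refine Eq.trans ?_ (mul_eq_zero_of_right (-4 * (r ^ 2 / ℓ ^ 2 + 1) / ℓ ^ 2 * W) hz)
  field_simp
  ring
end

section
/- Fix a natural number n ≥ 2, real numbers ℓ > 0 and a with 4ℓ²a + n² > 0, and natural numbers k, K. Set s := √(4ℓ²a + n²), ω := (n + s + 2k + 4K)/(2ℓ), and for x ∈ ℝ and j ∈ ℕ let (x)_j := ∏_{i=0}^{j−1}(x+i) denote the rising factorial. Define ψ : (0,∞) → ℝ by ψ(r) := (ℓ² + r²)^{−ℓω/2} · r^k · ∑_{j=0}^{K} [((−K)_j · (−K − s/2)_j) / ((n/2 + k)_j · j!)] · (−r²/ℓ²)^j. Then there exists a real number L ≠ 0 such that r^{(n+s)/2} · ψ(r) → L as r → ∞. In particular ψ(r) = O(r^{−(n+s)/2}) as r → ∞. -/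
open Filter Asymptotics

/-- A polynomial of degree at most `K` divided by `x ^ K` tends to its coefficient of
order `K` at infinity. -/
lemma tendsto_sum_mul_pow_div_pow_cobounded (c : ℕ → ℝ) (K : ℕ) :
    Tendsto (fun x : ℝ => (∑ j ∈ Finset.range (K + 1), c j * x ^ j) / x ^ K)
      (Bornology.cobounded ℝ) (nhds (c K)) := by
  have hcont : Continuous fun t : ℝ => ∑ j ∈ Finset.range (K + 1), c j * t ^ (K - j) := by
    fun_prop
  have hzero : ∑ j ∈ Finset.range (K + 1), c j * (0 : ℝ) ^ (K - j) = c K := by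
    rw [Finset.sum_range_succ, Finset.sum_eq_zero, zero_add, Nat.sub_self, pow_zero, mul_one]
    intro j hj
    rw [zero_pow (Nat.sub_pos_of_lt (Finset.mem_range.1 hj)).ne', mul_zero]
  have hlim := (hcont.tendsto 0).comp (tendsto_inv₀_cobounded (α := ℝ))
  rw [hzero] at hlim
  refine hlim.congr' ?_
  filter_upwards [Bornology.eventually_ne_cobounded (0 : ℝ)] with x hx
  simp only [Function.comp_apply, Finset.sum_div]
  refine Finset.sum_congr rfl fun j hj => ?_
  have hjK : j ≤ K := Nat.lt_succ_iff.1 (Finset.mem_range.1 hj)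
  rw [mul_div_assoc, inv_pow, pow_sub₀ x hx hjK]
  field_simp

lemma tendsto_rpow_mul_add_sq_rpow_neg_half {c : ℝ} (hc : 0 ≤ c) (p : ℝ) :
    Tendsto (fun r : ℝ => r ^ p * (c + r ^ 2) ^ (-p / 2)) atTop (nhds 1) := by
  have hbase : Tendsto (fun r : ℝ => c / r ^ 2 + 1) atTop (nhds 1) := by
    simpa using (tendsto_const_nhds (x := c)).div_atTop
      (tendsto_pow_atTop (α := ℝ) two_ne_zero) |>.add_const 1
  have hlim := hbase.rpow_const (p := -p / 2) (Or.inl one_ne_zero)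
  rw [Real.one_rpow] at hlim
  refine hlim.congr' ?_
  filter_upwards [eventually_gt_atTop 0] with r hr
  have hsplit : c + r ^ 2 = (c / r ^ 2 + 1) * r ^ 2 := by field_simp
  have hpow : (r ^ 2) ^ (-p / 2) = r ^ (-p) := by
    rw [← Real.rpow_natCast, ← Real.rpow_mul hr.le]
    congr 1
    push_cast
    ring
  rw [hsplit, Real.mul_rpow (by positivity) (by positivity), hpow, mul_left_comm,
    ← Real.rpow_add hr, add_neg_cancel, Real.rpow_zero, mul_one]

/-- The explicit polynomial (terminating hypergeometric) radial eigenfunction on the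
anti-de Sitter background decays as `r^{-(n+s)/2}` at infinity: `r^{(n+s)/2} ψ(r)` tends
to a nonzero limit, and in particular `ψ(r) = O(r^{-(n+s)/2})` as `r → ∞`. -/
theorem stmt10 (n : ℕ) (hn : 2 ≤ n) (ℓ a s ω : ℝ) (hℓ : 0 < ℓ)
    (hpos : 0 < 4 * ℓ ^ 2 * a + (n : ℝ) ^ 2)
    (k K : ℕ)
    (hs : s = Real.sqrt (4 * ℓ ^ 2 * a + (n : ℝ) ^ 2))
    (hω : ω = ((n : ℝ) + s + 2 * k + 4 * K) / (2 * ℓ))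
    (rf : ℝ → ℕ → ℝ)
    (hrf : ∀ (x : ℝ) (j : ℕ), rf x j = ∏ i ∈ Finset.range j, (x + i))
    (ψ : ℝ → ℝ)
    (hψ : ∀ r : ℝ, ψ r =
      (ℓ ^ 2 + r ^ 2) ^ (-(ℓ * ω) / 2) * r ^ k *
        ∑ j ∈ Finset.range (K + 1),
          (rf (-(K : ℝ)) j * rf (-(K : ℝ) - s / 2) j) /
              (rf ((n : ℝ) / 2 + (k : ℝ)) j * (Nat.factorial j : ℝ)) *
            (-(r ^ 2) / ℓ ^ 2) ^ j) :
    (∃ L : ℝ, L ≠ 0 ∧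
      Tendsto (fun r : ℝ => r ^ (((n : ℝ) + s) / 2) * ψ r) atTop (nhds L)) ∧
    ψ =O[atTop] fun r : ℝ => r ^ (-((n : ℝ) + s) / 2) := by
  have hs0 : 0 < s := hs ▸ Real.sqrt_pos.2 hpos
  have hn0 : (0 : ℝ) < n := by exact_mod_cast (by omega : 0 < n)
  set c : ℕ → ℝ := fun j => (rf (-(K : ℝ)) j * rf (-(K : ℝ) - s / 2) j) /
    (rf ((n : ℝ) / 2 + (k : ℝ)) j * (Nat.factorial j : ℝ)) with hc
  have hcK : c K ≠ 0 := by
    simp only [hc, hrf]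
    refine div_ne_zero (mul_ne_zero ?_ ?_) (mul_ne_zero ?_ (by positivity))
    · refine Finset.prod_ne_zero_iff.2 fun i hi => ?_
      have hiK : (i : ℝ) < K := by exact_mod_cast Finset.mem_range.1 hi
      linarith
    · refine Finset.prod_ne_zero_iff.2 fun i hi => ?_
      have hiK : (i : ℝ) < K := by exact_mod_cast Finset.mem_range.1 hi
      linarith
    · exact Finset.prod_ne_zero_iff.2 fun i _ => by positivity
  have harg : Tendsto (fun r : ℝ => -(r ^ 2) / ℓ ^ 2) atTop (Bornology.cobounded ℝ) := by
    have hbot : Tendsto (fun r : ℝ => -(r ^ 2) / ℓ ^ 2) atTop atBot :=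
      (tendsto_neg_atTop_atBot.comp (tendsto_pow_atTop two_ne_zero)).atBot_div_const
        (by positivity)
    exact hbot.mono_right IsOrderBornology.atBot_le_cobounded
  have hexp : ℓ * ω = ((n : ℝ) + s) / 2 + k + (2 * K : ℕ) := by
    rw [hω]
    push_cast
    field_simp
    ring
  have hlim : Tendsto (fun r : ℝ => r ^ (((n : ℝ) + s) / 2) * ψ r) atTop
      (nhds (1 * c K * (-1 / ℓ ^ 2) ^ K)) := by
    refine (((tendsto_rpow_mul_add_sq_rpow_neg_half (sq_nonneg ℓ) (ℓ * ω)).mul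
      ((tendsto_sum_mul_pow_div_pow_cobounded c K).comp harg)).mul_const _).congr' ?_
    filter_upwards [eventually_gt_atTop 0] with r hr
    have hrpow : r ^ (ℓ * ω) = r ^ (((n : ℝ) + s) / 2) * r ^ k * r ^ (2 * K) := by
      rw [hexp, Real.rpow_add hr, Real.rpow_add hr, Real.rpow_natCast, Real.rpow_natCast]
    have hargpow : (-(r ^ 2) / ℓ ^ 2) ^ K = r ^ (2 * K) * (-1 / ℓ ^ 2) ^ K := by
      rw [pow_mul, ← mul_pow]
      congr 1
      ring
    have hconst : (-1 / ℓ ^ 2) ^ K ≠ 0 :=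
      pow_ne_zero _ (div_ne_zero (by norm_num) (by positivity))
    have hr2K : r ^ (2 * K) ≠ 0 := by positivity
    rw [hψ, Function.comp_apply, hrpow, hargpow]
    generalize (-1 / ℓ ^ 2) ^ K = d at hconst ⊢
    change _ = _ * (_ * ∑ j ∈ Finset.range (K + 1), c j * (-(r ^ 2) / ℓ ^ 2) ^ j)
    generalize ∑ j ∈ Finset.range (K + 1), c j * (-(r ^ 2) / ℓ ^ 2) ^ j = S
    field_simp
  refine ⟨⟨_, ?_, hlim⟩, ?_⟩
  · exact mul_ne_zero (mul_ne_zero one_ne_zero hcK)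
      (pow_ne_zero _ (div_ne_zero (by norm_num) (by positivity)))
  · have hbig := (isBigO_refl (fun r : ℝ => r ^ (-((n : ℝ) + s) / 2)) atTop).mul
      (hlim.isBigO_one ℝ)
    refine hbig.congr' ?_ (by simp)
    filter_upwards [eventually_gt_atTop 0] with r hr
    rw [← mul_assoc, ← Real.rpow_add hr, neg_div, neg_add_cancel, Real.rpow_zero, one_mul]
end
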